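/- Lemma 3.5 (rotation covariance of the spherical projection body, convex case): Let n ≥ 2, let φ be a linear isometry of ℝ^{n+1} (φ ∈ O(n+1)) with φ(e_{n+1}) = e_{n+1}, and let K ∈ K_o(S^n_+) be a spherical convex body. Then Π_S(φK) = φ(Π_S K), where φK := {φ(v) : v ∈ K}. -/

import Mathlib

/-!
An isometry `φ` of `ℝ^{n+1}` fixing `e_{n+1}` preserves the hyperplane `e_{n+1}^⊥`, so it restricts
to a linear isometry `ψ` of `ℝⁿ`. In gnomonic coordinates `φ` acts as `ψ`: `gmap (φ v) = ψ (gmap v)`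
and `gInv (ψ x) = φ (gInv x)`. The projection body commutes with `ψ`, because `ψ` maps the shadow of
`C` along `u` onto the shadow of `ψ C` along `ψ u` and Hausdorff measure is invariant under
isometries. No restriction to the hemisphere is needed for the equivariance of `gmap`: `φ` preserves
the denominator `⟪v, e_{n+1}⟫`, so both sides agree even where it vanishes and division gives `0`.
-/

open MeasureTheory Set Metric Filter
open scoped RealInnerProductSpace ENNReal NNReal Topology Pointwise

noncomputable section

namespace PPI

/-- `n`-dimensional Euclidean space. -/
abbrev E (m : ℕ) := EuclideanSpace ℝ (Fin m)

/-- The spherical measure `M_s(A) = ∫_A (1+‖x‖²)^{-(n+1)/2} dx`. -/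
def Ms (n : ℕ) (A : Set (E n)) : ℝ :=
  ∫ x in A, (1 + ‖x‖ ^ 2) ^ (-(((n : ℝ) + 1) / 2))

/-- The hyperbolic weight measure `m(A) = ∫_A (1+‖y‖²)^{-1/2} dy`. -/
def mH (n : ℕ) (A : Set (E n)) : ℝ :=
  ∫ y in A, (1 + ‖y‖ ^ 2) ^ (-(1 / 2 : ℝ))

/-- The chord set `A_{u,x'} = {t : x' + t u ∈ A}`. -/
def chord {m : ℕ} (u : E m) (A : Set (E m)) (x' : E m) : Set ℝ :=
  {t : ℝ | x' + t • u ∈ A}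

/-- Steiner symmetrization of `A` in direction `u`. -/
def steiner {m : ℕ} (u : E m) (A : Set (E m)) : Set (E m) :=
  {x | ∃ x' t, ⟪x', u⟫ = 0 ∧ x = x' + t • u ∧
    (chord u A x').Nonempty ∧ μH[1] (chord u A x') < ⊤ ∧
    |t| ≤ (μH[1] (chord u A x')).toReal / 2}

/-- Orthogonal projection (shadow) of `C` onto the hyperplane `u^⊥` (`u` a unit vector). -/
def shadow {m : ℕ} (u : E m) (C : Set (E m)) : Set (E m) :=
  (fun x => x - ⟪x, u⟫ • u) '' C

/-- The projection body `ΠC`. -/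
def projBody (m : ℕ) (C : Set (E m)) : Set (E m) :=
  {x | ∀ u : E m, ‖u‖ = 1 → ⟪x, u⟫ ≤ (μH[(m : ℝ) - 1] (shadow u C)).toReal}

/-- The polar body of a set in `ℝⁿ`. -/
def polarSet {m : ℕ} (C : Set (E m)) : Set (E m) :=
  {y | ∀ x ∈ C, ⟪y, x⟫ ≤ 1}

/-- The polar projection body `Π*C`. -/
def polarProjBody (m : ℕ) (C : Set (E m)) : Set (E m) :=
  polarSet (projBody m C)

/-- The last standard basis vector `e_{n+1}` of `ℝ^{n+1}`. -/
def eL (n : ℕ) : E (n + 1) := EuclideanSpace.single (Fin.last n) 1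

/-- The open upper hemisphere `S^n_+`. -/
def upperHemi (n : ℕ) : Set (E (n + 1)) :=
  {v | ‖v‖ = 1 ∧ 0 < ⟪v, eL n⟫}

/-- The gnomonic projection `g(v) = v/(v·e_{n+1}) − e_{n+1}`, with `ℝⁿ = e_{n+1}^⊥`
identified with `EuclideanSpace ℝ (Fin n)` via the first `n` coordinates. -/
def gmap (n : ℕ) (v : E (n + 1)) : E n :=
  (EuclideanSpace.equiv (Fin n) ℝ).symm fun i => v (Fin.castSucc i) / ⟪v, eL n⟫

/-- The point `x + e_{n+1} ∈ ℝ^{n+1}` associated to `x ∈ ℝⁿ`. -/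
def lift (n : ℕ) (x : E n) : E (n + 1) :=
  (EuclideanSpace.equiv (Fin (n + 1)) ℝ).symm (Fin.snoc (fun i => x i) 1)

/-- The inverse gnomonic projection `g^{-1}(x) = (x+e_{n+1})/‖x+e_{n+1}‖`. -/
def gInv (n : ℕ) (x : E n) : E (n + 1) := ‖lift n x‖⁻¹ • lift n x

/-- The spherical polar body `A° = {v ∈ Sⁿ : v·w ≤ 0 for all w ∈ A}`. -/
def sphPolar (n : ℕ) (A : Set (E (n + 1))) : Set (E (n + 1)) :=
  {v | ‖v‖ = 1 ∧ ∀ w ∈ A, ⟪v, w⟫ ≤ 0}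

/-- The spherical projection body `Π_S K = g^{-1}(Π g(K))`. -/
def sphProjBody (n : ℕ) (K : Set (E (n + 1))) : Set (E (n + 1)) :=
  gInv n '' projBody n (gmap n '' K)

/-- The spherical cap of radius `α` centered at `e_{n+1}`. -/
def sphCap (n : ℕ) (α : ℝ) : Set (E (n + 1)) :=
  {v | ‖v‖ = 1 ∧ Real.arccos ⟪v, eL n⟫ ≤ α}

/-- A spherical convex body `K ∈ K_o(S^n_+)`: a closed subset of the open upper
hemisphere whose radial extension is convex and whose gnomonic image contains
`0` in its interior. -/
structure IsSphConvexBody (n : ℕ) (K : Set (E (n + 1))) : Prop where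
  subset_upper : K ⊆ upperHemi n
  closed : IsClosed K
  radial_convex : Convex ℝ {x : E (n + 1) | ∃ r : ℝ, 0 ≤ r ∧ ∃ v ∈ K, x = r • v}
  zero_mem_interior : (0 : E n) ∈ interior (gmap n '' K)

/-- `F(t) = ∫_0^{π/2 − arctan t} (sin r)^{n-1} dr`. -/
def Fs (n : ℕ) (t : ℝ) : ℝ :=
  ∫ r in (0 : ℝ)..(Real.pi / 2 - Real.arctan t), Real.sin r ^ (n - 1)

/-- `G(t) = ∫_0^{1/t} r^{n-1} (1+r²)^{-1/2} dr`. -/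
def Gh (n : ℕ) (t : ℝ) : ℝ :=
  ∫ r in (0 : ℝ)..(1 / t), r ^ (n - 1) * (1 + r ^ 2) ^ (-(1 / 2 : ℝ))

/-- `ω_k`, the Lebesgue measure of the unit ball of `ℝ^k`. -/
def omega (k : ℕ) : ℝ := (volume (Metric.ball (0 : E k) 1)).toReal


/-- The linear inclusion `x ↦ (x, 0)` of `ℝⁿ` into `ℝ^{n+1}` as `e_{n+1}^⊥`. -/
def incl (n : ℕ) : E n →ₗ[ℝ] E (n + 1) where
  toFun x := WithLp.toLp 2 (Fin.snoc (fun i => x i) 0)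
  map_add' x y := by
    ext i
    refine Fin.lastCases ?_ (fun i => ?_) i <;> simp
  map_smul' c x := by
    ext i
    refine Fin.lastCases ?_ (fun i => ?_) i <;> simp

/-- The projection of `ℝ^{n+1}` onto its first `n` coordinates. -/
def firstCoords (n : ℕ) : E (n + 1) →ₗ[ℝ] E n where
  toFun v := WithLp.toLp 2 fun i => v (Fin.castSucc i)
  map_add' v w := by ext i; simp
  map_smul' c v := by ext i; simp

lemma inner_eL (n : ℕ) (v : E (n + 1)) : ⟪v, eL n⟫ = v (Fin.last n) := by
  simp [eL, EuclideanSpace.inner_single_right]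

lemma norm_incl (n : ℕ) (x : E n) : ‖incl n x‖ = ‖x‖ := by
  simp [EuclideanSpace.norm_eq, Fin.sum_univ_castSucc, incl]

lemma incl_firstCoords (n : ℕ) (v : E (n + 1)) :
    incl n (firstCoords n v) = v - ⟪v, eL n⟫ • eL n := by
  rw [inner_eL]
  ext i
  refine Fin.lastCases ?_ (fun i => ?_) i
  · simp [incl, firstCoords, eL]
  · simp [incl, firstCoords, eL, Fin.ext_iff, i.2.ne]

lemma firstCoords_incl (n : ℕ) (x : E n) : firstCoords n (incl n x) = x := by
  ext i
  simp [incl, firstCoords]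

lemma firstCoords_eL (n : ℕ) : firstCoords n (eL n) = 0 := by
  ext i
  simp [firstCoords, eL, Fin.ext_iff, i.2.ne]

lemma inner_incl_eL (n : ℕ) (x : E n) : ⟪incl n x, eL n⟫ = 0 := by
  rw [inner_eL]
  simp [incl]

lemma lift_eq (n : ℕ) (x : E n) : lift n x = incl n x + eL n := by
  ext i
  refine Fin.lastCases ?_ (fun i => ?_) i
  · simp [incl, lift, eL]
  · simp [incl, lift, eL, Fin.ext_iff, i.2.ne]

lemma gmap_eq (n : ℕ) (v : E (n + 1)) : gmap n v = (⟪v, eL n⟫)⁻¹ • firstCoords n v := by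
  ext i
  simp [gmap, firstCoords, div_eq_inv_mul]

lemma inner_map_eL {n : ℕ} {φ : E (n + 1) ≃ₗᵢ[ℝ] E (n + 1)} (hφ : φ (eL n) = eL n)
    (v : E (n + 1)) : ⟪φ v, eL n⟫ = ⟪v, eL n⟫ := by
  conv_lhs => rw [← hφ]
  exact φ.inner_map_map v (eL n)

/-- A linear isometry fixing `e_{n+1}` maps `e_{n+1}^⊥` into itself. -/
lemma incl_firstCoords_map_incl {n : ℕ} {φ : E (n + 1) ≃ₗᵢ[ℝ] E (n + 1)}
    (hφ : φ (eL n) = eL n) (x : E n) :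
    incl n (firstCoords n (φ (incl n x))) = φ (incl n x) := by
  rw [incl_firstCoords, inner_map_eL hφ, inner_incl_eL, zero_smul, sub_zero]

/-- The restriction to `ℝⁿ = e_{n+1}^⊥` of a linear isometry fixing `e_{n+1}`. -/
def restr {n : ℕ} (φ : E (n + 1) ≃ₗᵢ[ℝ] E (n + 1)) (hφ : φ (eL n) = eL n) :
    E n ≃ₗᵢ[ℝ] E n :=
  LinearIsometry.toLinearIsometryEquiv
    { toLinearMap := firstCoords n ∘ₗ φ.toLinearEquiv.toLinearMap ∘ₗ incl n
      norm_map' := fun x => by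
        change ‖firstCoords n (φ (incl n x))‖ = ‖x‖
        rw [← norm_incl, incl_firstCoords_map_incl hφ, φ.norm_map, norm_incl] } rfl

lemma restr_apply {n : ℕ} (φ : E (n + 1) ≃ₗᵢ[ℝ] E (n + 1)) (hφ : φ (eL n) = eL n) (x : E n) :
    restr φ hφ x = firstCoords n (φ (incl n x)) := rfl

lemma gmap_map {n : ℕ} (φ : E (n + 1) ≃ₗᵢ[ℝ] E (n + 1)) (hφ : φ (eL n) = eL n)
    (v : E (n + 1)) : gmap n (φ v) = restr φ hφ (gmap n v) := by
  rw [gmap_eq, gmap_eq, map_smul, restr_apply, incl_firstCoords, inner_map_eL hφ]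
  simp [hφ, firstCoords_eL]

lemma gInv_restr {n : ℕ} (φ : E (n + 1) ≃ₗᵢ[ℝ] E (n + 1)) (hφ : φ (eL n) = eL n)
    (x : E n) : gInv n (restr φ hφ x) = φ (gInv n x) := by
  have h : lift n (restr φ hφ x) = φ (lift n x) := by
    rw [lift_eq, lift_eq, restr_apply, incl_firstCoords_map_incl hφ, map_add, hφ]
  rw [gInv, gInv, h, φ.norm_map, map_smul]

lemma shadow_image {m : ℕ} (ψ : E m ≃ₗᵢ[ℝ] E m) (u : E m) (C : Set (E m)) :
    shadow (ψ u) (ψ '' C) = ψ '' shadow u C := by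
  simp only [shadow, image_image, map_sub, map_smul, ψ.inner_map_map]

lemma mem_projBody_image {m : ℕ} (ψ : E m ≃ₗᵢ[ℝ] E m) (C : Set (E m)) (x : E m) :
    ψ x ∈ projBody m (ψ '' C) ↔ x ∈ projBody m C := by
  simp only [projBody, mem_ofPred_eq]
  rw [ψ.surjective.forall]
  refine forall_congr' fun u => ?_
  rw [ψ.norm_map, ψ.inner_map_map, shadow_image,
    ψ.isometry.hausdorffMeasure_image (Or.inr ψ.surjective)]

lemma projBody_image {m : ℕ} (ψ : E m ≃ₗᵢ[ℝ] E m) (C : Set (E m)) :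
    projBody m (ψ '' C) = ψ '' projBody m C := by
  ext y
  obtain ⟨x, rfl⟩ := ψ.surjective y
  rw [mem_projBody_image, ψ.injective.mem_set_image]

/-- Lemma 3.5, rotation covariance of the spherical projection body (convex case). -/
theorem sphProjBody_rotation (n : ℕ) (hn : 2 ≤ n)
    (φ : E (n + 1) ≃ₗᵢ[ℝ] E (n + 1)) (hφ : φ (eL n) = eL n)
    (K : Set (E (n + 1))) (hK : IsSphConvexBody n K) :
    sphProjBody n ((fun v => φ v) '' K) = (fun v => φ v) '' sphProjBody n K := by
  have h : gmap n '' ((fun v => φ v) '' K) = restr φ hφ '' (gmap n '' K) := by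
    simp only [image_image, gmap_map φ hφ]
  rw [sphProjBody, sphProjBody, h, projBody_image]
  simp only [image_image, gInv_restr φ hφ]

end PPI
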